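/- arXiv:1811.00248 — 2 statements merged into one kernel-verified Lean document; each statement's English description precedes it below -/
import Mathlib

section
/- For every natural number n: H_{3n}(F(x,6)) = (-1)^n (n+1)^2, H_{3n+1}(F(x,6)) = (-1)^n (n+1)^2, and H_{3n+2}(F(x,6)) = (-1)^{n+1} · (3/2)·(n+2)(n+1)(2n+3). -/
/-!
Let `L` be the functional on `ℚ[X]` with moments `L(X^k) = Catalan(k+1)`. Its monic orthogonal
polynomials are the Chebyshev polynomials `U_n((X - 2)/2)`, and `L(U_n X^k)` is the Catalan-triangle
number `ballot k n`. Since `C_k^{(6)} = ballot (k+2) 2 = L(X² U₂ X^k)`, the sequence in question is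
the moment sequence of the functional `f ↦ L(X² U₂ f)`, where `X² U₂ = X² (X - 1) (X - 3)`.

By Christoffel's idea, if `Q = U_{n+4} + a₃ U_{n+3} + a₂ U_{n+2} + a₁ U_{n+1} + a₀ U_n` has a double
zero at `0` and zeros at `1` and `3`, then `P = Q / (X² U₂)` is the monic `n`-th orthogonal
polynomial of the new functional and `H_{n+1} = a₀ H_n` (`hankel_six_succ`, resting on the
column operation of `hankel_succ_of_orthogonal`). The values of `U_n` at `1` and `3` have period
`3` in `n` up to sign, and `U_n(0)`, `U_n'(0)` are polynomial in `n` up to sign, so the linear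
system for the `aᵢ` can be solved in each residue class of `n` modulo `3`; the product of the
resulting ratios `a₀` telescopes.
-/

/-- The Hankel determinant `H_n(a)` of a sequence `a : ℕ → ℤ`: the determinant of the
`n × n` matrix whose `(i,j)` entry is `a (i + j)`.  `H_0 = 1` by convention (empty matrix). -/
def hankel (a : ℕ → ℤ) (n : ℕ) : ℤ :=
  Matrix.det (Matrix.of fun i j : Fin n => a (i.val + j.val))

/-- The `r`-th convolution power of the Catalan numbers:
`C_k^{(r)} = (r/(2k+r)) · binom(2k+r, k)`. -/
def catalanConv (r : ℕ) (k : ℕ) : ℤ :=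
  ((r : ℤ) * ((2 * k + r).choose k : ℤ)) / (2 * k + r)

open Polynomial

/-! ### The Catalan triangle and the moments -/

/-- Entry `(k, n)` of the Catalan triangle generated by `B (k+1) n = B k (n-1) + 2 B k n + B k (n+1)`:
the number of 2-coloured Motzkin paths of length `k` from height `0` to height `n`. -/
def ballot : ℕ → ℕ → ℤ
  | 0, n => if n = 0 then 1 else 0
  | k + 1, 0 => 2 * ballot k 0 + ballot k 1
  | k + 1, n + 1 => ballot k n + 2 * ballot k (n + 1) + ballot k (n + 2)

lemma ballot_eq_zero (k n : ℕ) (h : k < n) : ballot k n = 0 := by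
  induction k generalizing n with
  | zero => simp [ballot]; omega
  | succ k ih =>
    obtain ⟨m, rfl⟩ : ∃ m, n = m + 1 := ⟨n - 1, by omega⟩
    simp [ballot, ih m (by omega), ih (m + 1) (by omega), ih (m + 2) (by omega)]

lemma ballot_self (k : ℕ) : ballot k k = 1 := by
  induction k with
  | zero => simp [ballot]
  | succ k ih =>
    simp [ballot, ih, ballot_eq_zero k (k + 1) (by omega), ballot_eq_zero k (k + 2) (by omega)]

/-- Both sides satisfy the same recurrence, by Pascal's rule applied twice; at the boundary `n = 0`
the symmetry `choose (2k+1) (k+1) = choose (2k+1) k` enters. -/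
lemma ballot_eq_choose (k n : ℕ) :
    ballot k n = ((2 * k + 1).choose (k + n + 1) : ℤ) - (2 * k + 1).choose (k + n + 2) := by
  induction k generalizing n with
  | zero => rcases n with _ | n <;> simp [ballot, Nat.choose_eq_zero_of_lt]
  | succ k ih =>
    have pascal (m : ℕ) : ((2 * (k + 1) + 1).choose (m + 2) : ℤ) =
        (2 * k + 1).choose m + 2 * (2 * k + 1).choose (m + 1) + (2 * k + 1).choose (m + 2) := by
      rw [show 2 * (k + 1) + 1 = (2 * k + 1) + 1 + 1 by ring]
      simp only [Nat.choose_succ_succ', Nat.cast_add]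
      ring
    rcases n with _ | n
    · have h := pascal k
      have h' := pascal (k + 1)
      have hs : ((2 * k + 1).choose (k + 1) : ℤ) = (2 * k + 1).choose k := by
        exact_mod_cast Nat.choose_symm_half k
      simp only [ballot, ih]
      rw [show k + 1 + 0 + 1 = k + 2 by ring, show k + 1 + 0 + 2 = k + 1 + 2 by ring, h, h']
      simp only [add_zero, add_assoc, Nat.reduceAdd]
      linear_combination hs
    · have h := pascal (k + n + 1)
      have h' := pascal (k + n + 2)
      simp only [ballot, ih]
      rw [show k + 1 + (n + 1) + 1 = k + n + 1 + 2 by ring,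
        show k + 1 + (n + 1) + 2 = k + n + 2 + 2 by ring, h, h']
      simp only [← add_assoc]
      rw [show k + n + 2 + 1 = k + n + 1 + 2 by ring]
      simp only [add_assoc, Nat.reduceAdd]
      ring

/-- In particular the integer division in `catalanConv 6` is exact. -/
lemma catalanConv_six_eq_ballot (k : ℕ) : catalanConv 6 k = ballot (k + 2) 2 := by
  have h1 : ((2 * k + 6 : ℕ) : ℤ) * (2 * k + 5).choose (k + 5) =
      (2 * k + 6).choose (k + 6) * ((k + 6 : ℕ) : ℤ) := by
    exact_mod_cast Nat.add_one_mul_choose_eq (2 * k + 5) (k + 5)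
  have h2 : ((2 * k + 6).choose (k + 6) : ℤ) =
      (2 * k + 5).choose (k + 5) + (2 * k + 5).choose (k + 6) := by
    exact_mod_cast Nat.choose_succ_succ' (2 * k + 5) (k + 5)
  have h3 : (2 * k + 6).choose k = (2 * k + 6).choose (k + 6) :=
    Nat.choose_symm_of_eq_add (by ring)
  unfold catalanConv
  rw [h3, ballot_eq_choose]
  apply Int.ediv_eq_of_eq_mul_left (by positivity)
  rw [show 2 * (k + 2) + 1 = 2 * k + 5 by ring, show k + 2 + 2 + 1 = k + 5 by ring,
    show k + 2 + 2 + 2 = k + 6 by ring]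
  push_cast at *
  linear_combination (-2 : ℤ) * h1 - (2 * (k : ℤ) + 6) * h2

/-! ### Chebyshev polynomials -/

/-- The functional `ℚ[X] → ℚ` with moments `ballot k 0 = Catalan (k + 1)`. -/
noncomputable def catalanFunctional : ℚ[X] →ₗ[ℚ] ℚ :=
  Polynomial.lsum fun k => (ballot k 0 : ℚ) • LinearMap.id

/-- The shifted Chebyshev polynomial `U_n((X - 2) / 2)`: the monic orthogonal polynomials of
`catalanFunctional`. -/
noncomputable def cheb : ℕ → ℚ[X]
  | 0 => 1
  | 1 => X - 2
  | n + 2 => (X - 2) * cheb (n + 1) - cheb n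

lemma catalanFunctional_cheb_mul_X_pow (n k : ℕ) :
    catalanFunctional (cheb n * X ^ k) = ballot k n := by
  induction n using Nat.strong_induction_on generalizing k with
  | _ n ih =>
    match n with
    | 0 => simp [cheb, catalanFunctional, X_pow_eq_monomial, lsum_apply]
    | 1 =>
      have h0 := ih 0 (by simp) k
      have h1 := ih 0 (by simp) (k + 1)
      have : cheb 1 * X ^ k = cheb 0 * X ^ (k + 1) - (2 : ℚ) • (cheb 0 * X ^ k) := by
        simp only [cheb, smul_eq_C_mul, map_ofNat]; ring
      rw [this, map_sub, map_smul, h0, h1]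
      simp [ballot]
    | n + 2 =>
      have h0 := ih n (by omega) k
      have h1 := ih (n + 1) (by omega) k
      have h2 := ih (n + 1) (by omega) (k + 1)
      have : cheb (n + 2) * X ^ k =
          cheb (n + 1) * X ^ (k + 1) - (2 : ℚ) • (cheb (n + 1) * X ^ k) - cheb n * X ^ k := by
        simp only [cheb, smul_eq_C_mul, map_ofNat]; ring
      rw [this, map_sub, map_sub, map_smul, h0, h1, h2]
      simp [ballot]
      ring

lemma cheb_isMonicOfDegree (n : ℕ) : IsMonicOfDegree (cheb n) n := by
  have hX : IsMonicOfDegree (X - 2 : ℚ[X]) 1 := isMonicOfDegree_X_sub_one (2 : ℚ)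
  induction n using Nat.strong_induction_on with
  | _ n ih =>
    match n with
    | 0 => exact isMonicOfDegree_zero_iff.mpr rfl
    | 1 => exact hX
    | n + 2 =>
      have h1 := hX.mul (ih (n + 1) (by omega))
      rw [show 1 + (n + 1) = n + 2 by ring] at h1
      exact h1.sub (by rw [(ih n (by omega)).natDegree_eq]; omega)

/-! ### Hankel determinants and orthogonal polynomials -/

/-- If a monic `P` of degree `n` is orthogonal, for a functional `φ` with moments `a`, to all
polynomials of degree less than `n`, then consecutive Hankel determinants of `a` have ratio
`φ (P * X ^ n)`: column operations turn the last column into `(0, …, 0, φ (P * X ^ n))`. -/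
lemma hankel_succ_of_orthogonal (a : ℕ → ℤ) (φ : ℚ[X] →ₗ[ℚ] ℚ) (hφ : ∀ k, φ (X ^ k) = a k)
    (n : ℕ) (P : ℚ[X]) (hP : IsMonicOfDegree P n) (hlt : ∀ k < n, φ (P * X ^ k) = 0) :
    (hankel a (n + 1) : ℚ) = φ (P * X ^ n) * hankel a n := by
  have cast_hankel (m : ℕ) : (hankel a m : ℚ) =
      Matrix.det (Matrix.of fun i j : Fin m => (a (i.val + j.val) : ℚ)) := by
    rw [hankel, Int.cast_det]; rfl
  have key (k : ℕ) : φ (P * X ^ k) = ∑ j : Fin (n + 1), P.coeff j * (a (k + j) : ℚ) := by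
    conv_lhs => rw [P.as_sum_range' (n + 1) (by rw [hP.natDegree_eq]; omega)]
    rw [Finset.sum_mul, map_sum, Finset.sum_range]
    refine Finset.sum_congr rfl fun j _ => ?_
    rw [← C_mul_X_pow_eq_monomial, mul_assoc, ← pow_add, ← smul_eq_C_mul, map_smul, hφ,
      smul_eq_mul, add_comm k]
  rw [cast_hankel, cast_hankel]
  set M : Matrix (Fin (n + 1)) (Fin (n + 1)) ℚ :=
    Matrix.of fun i j => (a (i.val + j.val) : ℚ) with hM
  have hdet := Matrix.det_updateCol_sum M (Fin.last n) (fun j => P.coeff j)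
  have hlead : P.coeff n = 1 := by
    have := hP.monic.coeff_natDegree
    rwa [hP.natDegree_eq] at this
  have hcol (i : Fin (n + 1)) : ∑ j : Fin (n + 1), P.coeff j • M i j = φ (P * X ^ i.val) := by
    rw [key]; rfl
  simp only [hcol, Fin.val_last, hlead, one_smul] at hdet
  rw [← hdet, Matrix.det_succ_column _ (Fin.last n), Fin.sum_univ_castSucc,
    Finset.sum_eq_zero]
  · simp only [Fin.val_last, Even.neg_one_pow ⟨n, rfl⟩, Matrix.updateCol_self, zero_add, one_mul]
    congr 2
    ext i j
    simp [hM, Fin.ext_iff, j.2.ne]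
  · intro i _
    simp [hlt i i.2]

/-- The functional `f ↦ L(X² U₂ f)`, where `L` is `catalanFunctional`. -/
noncomputable def sixFunctional : ℚ[X] →ₗ[ℚ] ℚ :=
  catalanFunctional ∘ₗ LinearMap.mulLeft ℚ (X ^ 2 * cheb 2)

lemma sixFunctional_X_pow (k : ℕ) : sixFunctional (X ^ k) = catalanConv 6 k := by
  rw [catalanConv_six_eq_ballot, ← catalanFunctional_cheb_mul_X_pow]
  simp only [sixFunctional, LinearMap.comp_apply, LinearMap.mulLeft_apply]
  congr 1
  ring

lemma X_sq_mul_cheb_two_dvd (Q : ℚ[X]) (h0 : Q.eval 0 = 0) (h0' : (derivative Q).eval 0 = 0)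
    (h1 : Q.eval 1 = 0) (h3 : Q.eval 3 = 0) : X ^ 2 * cheb 2 ∣ Q := by
  have e : (X ^ 2 * cheb 2 : ℚ[X]) = X ^ 2 * ((X - C 1) * (X - C 3)) := by
    simp only [cheb, map_one, map_ofNat]; ring
  have c01 : IsCoprime (X - C 0 : ℚ[X]) (X - C 1) := isCoprime_X_sub_C_of_isUnit_sub (by norm_num)
  have c03 : IsCoprime (X - C 0 : ℚ[X]) (X - C 3) := isCoprime_X_sub_C_of_isUnit_sub (by norm_num)
  have c13 : IsCoprime (X - C 1 : ℚ[X]) (X - C 3) := isCoprime_X_sub_C_of_isUnit_sub (by norm_num)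
  rw [map_zero, sub_zero] at c01 c03
  rw [e]
  refine IsCoprime.mul_dvd ((c01.mul_right c03).pow_left) ?_
    (IsCoprime.mul_dvd c13 (dvd_iff_isRoot.mpr h1) (dvd_iff_isRoot.mpr h3))
  rw [X_pow_dvd_iff]
  intro d hd
  interval_cases d
  · rw [coeff_zero_eq_eval_zero, h0]
  · rw [← coeff_zero_eq_eval_zero, coeff_derivative] at h0'
    simpa using h0'

/-- Christoffel's formula: a combination of `U_n, …, U_{n+4}` vanishing on the zeros of `X² U₂`
is `X² U₂` times the `n`-th orthogonal polynomial of `sixFunctional`, and its lowest coefficient is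
the ratio of consecutive Hankel determinants. The vanishing conditions are phrased uniformly through
the four functionals `ψ`: evaluation at `0`, `1`, `3`, and evaluation of the derivative at `0`. -/
lemma hankel_six_succ (n : ℕ) (a₀ a₁ a₂ a₃ : ℚ)
    (h : ∀ ψ : ℚ[X] →ₗ[ℚ] ℚ, ψ = leval 0 ∨ ψ = leval 0 ∘ₗ derivative ∨ ψ = leval 1 ∨ ψ = leval 3 →
      ψ (cheb (n + 4)) + a₃ * ψ (cheb (n + 3)) + a₂ * ψ (cheb (n + 2)) + a₁ * ψ (cheb (n + 1))
        + a₀ * ψ (cheb n) = 0) :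
    (hankel (catalanConv 6) (n + 1) : ℚ) = a₀ * hankel (catalanConv 6) n := by
  set R : ℚ[X] := a₃ • cheb (n + 3) + a₂ • cheb (n + 2) + a₁ • cheb (n + 1) + a₀ • cheb n with hR
  have hψ (ψ : ℚ[X] →ₗ[ℚ] ℚ) : ψ (cheb (n + 4) + R) =
      ψ (cheb (n + 4)) + a₃ * ψ (cheb (n + 3)) + a₂ * ψ (cheb (n + 2)) + a₁ * ψ (cheb (n + 1))
        + a₀ * ψ (cheb n) := by
    simp only [hR, map_add, map_smul, smul_eq_mul]; ring
  have hQ : IsMonicOfDegree (cheb (n + 4) + R) (n + 4) := by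
    refine (cheb_isMonicOfDegree (n + 4)).add_right ?_
    have hd (i : ℕ) (c : ℚ) (hi : i < 4) : (c • cheb (n + i)).natDegree < n + 4 :=
      (natDegree_smul_le _ _).trans_lt (by rw [(cheb_isMonicOfDegree (n + i)).natDegree_eq]; omega)
    have hadd (p q : ℚ[X]) (hp : p.natDegree < n + 4) (hq : q.natDegree < n + 4) :
        (p + q).natDegree < n + 4 := (natDegree_add_le p q).trans_lt (max_lt hp hq)
    exact hadd _ _ (hadd _ _ (hadd _ _ (hd 3 _ (by norm_num)) (hd 2 _ (by norm_num)))
      (hd 1 _ (by norm_num))) (hd 0 _ (by norm_num))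
  have hv (ψ) (hh) := (hψ ψ).trans (h ψ hh)
  obtain ⟨P, hP⟩ := X_sq_mul_cheb_two_dvd (cheb (n + 4) + R) (hv (leval 0) (by simp))
    (hv (leval 0 ∘ₗ derivative) (by simp)) (hv (leval 1) (by simp)) (hv (leval 3) (by simp))
  have hval (k : ℕ) : sixFunctional (P * X ^ k) = catalanFunctional ((cheb (n + 4) + R) * X ^ k) := by
    simp only [sixFunctional, LinearMap.comp_apply, LinearMap.mulLeft_apply, hP, mul_assoc]
  have hval' (k : ℕ) : sixFunctional (P * X ^ k) = ballot k (n + 4) + a₃ * ballot k (n + 3) +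
      a₂ * ballot k (n + 2) + a₁ * ballot k (n + 1) + a₀ * ballot k n := by
    simp only [hval, hR, add_mul, map_add, smul_mul_assoc, map_smul, smul_eq_mul,
      catalanFunctional_cheb_mul_X_pow]
    ring
  have hPdeg : IsMonicOfDegree P n := by
    have hD : IsMonicOfDegree (X ^ 2 * cheb 2 : ℚ[X]) 4 :=
      (isMonicOfDegree_X_pow ℚ 2).mul (cheb_isMonicOfDegree 2)
    rw [hP, add_comm n 4] at hQ
    exact hD.of_mul_left hQ
  rw [hankel_succ_of_orthogonal _ sixFunctional sixFunctional_X_pow n P hPdeg, hval']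
  · simp [ballot_self, ballot_eq_zero]
  · intro k hk
    rw [hval']
    simp [ballot_eq_zero k (n + 4) (by omega), ballot_eq_zero k (n + 3) (by omega),
      ballot_eq_zero k (n + 2) (by omega), ballot_eq_zero k (n + 1) (by omega),
      ballot_eq_zero k n hk]

/-! ### Values of the Chebyshev polynomials at the zeros of `X² U₂` -/

lemma cheb_eval_rec (n : ℕ) (x : ℚ) :
    (cheb (n + 2)).eval x = (x - 2) * (cheb (n + 1)).eval x - (cheb n).eval x := by
  simp [cheb]

lemma cheb_eval_zero (n : ℕ) : (cheb n).eval 0 = (-1) ^ n * (n + 1) := by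
  induction n using Nat.strong_induction_on with
  | _ n ih =>
    match n with
    | 0 => simp [cheb]
    | 1 => simp [cheb]; norm_num
    | n + 2 =>
      rw [cheb_eval_rec, ih (n + 1) (by omega), ih n (by omega)]
      push_cast
      ring

lemma cheb_derivative_eval_zero (n : ℕ) :
    (derivative (cheb n)).eval 0 = -(-1) ^ n * (n * (n + 1) * (n + 2) / 6) := by
  induction n using Nat.strong_induction_on with
  | _ n ih =>
    match n with
    | 0 => simp [cheb]
    | 1 => simp [cheb, derivative_ofNat]; norm_num
    | n + 2 =>
      have : (derivative (cheb (n + 2))).eval 0 = (cheb (n + 1)).eval 0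
          - 2 * (derivative (cheb (n + 1))).eval 0 - (derivative (cheb n)).eval 0 := by
        simp [cheb, derivative_ofNat]; ring
      rw [this, ih (n + 1) (by omega), ih n (by omega), cheb_eval_zero]
      push_cast
      ring

lemma cheb_eval_one (m : ℕ) : (cheb (3 * m)).eval 1 = 1 ∧ (cheb (3 * m + 1)).eval 1 = -1 := by
  induction m with
  | zero => simp [cheb]; norm_num
  | succ m ih =>
    have h2 := cheb_eval_rec (3 * m) 1
    have h3 := cheb_eval_rec (3 * m + 1) 1
    have h4 := cheb_eval_rec (3 * m + 2) 1
    simp only [Nat.mul_succ, add_assoc, Nat.reduceAdd] at *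
    constructor <;> linarith [ih.1, ih.2]

lemma cheb_eval_three (m : ℕ) :
    (cheb (3 * m)).eval 3 = (-1) ^ m ∧ (cheb (3 * m + 1)).eval 3 = (-1) ^ m := by
  induction m with
  | zero => simp [cheb]; norm_num
  | succ m ih =>
    have h2 := cheb_eval_rec (3 * m) 3
    have h3 := cheb_eval_rec (3 * m + 1) 3
    have h4 := cheb_eval_rec (3 * m + 2) 3
    simp only [Nat.mul_succ, add_assoc, Nat.reduceAdd, pow_succ] at *
    constructor <;> linarith [ih.1, ih.2]

/-! ### The ratios of consecutive determinants -/

/-- For `n ≡ 0 (mod 3)` the vanishing conditions are solved by the binomial coefficients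
`1, 4, 6, 4, 1`. -/
lemma hankel_six_ratio_zero (m : ℕ) : (hankel (catalanConv 6) (3 * m + 1) : ℚ) =
    1 * hankel (catalanConv 6) (3 * m) := by
  apply hankel_six_succ (3 * m) 1 4 6 4
  have h2 (x) := cheb_eval_rec (3 * m) x
  have h3 (x) := cheb_eval_rec (3 * m + 1) x
  have h4 (x) := cheb_eval_rec (3 * m + 2) x
  rintro ψ (rfl | rfl | rfl | rfl)
  · simp only [leval_apply, cheb_eval_zero]
    push_cast
    ring
  · simp only [leval_apply, LinearMap.comp_apply, cheb_derivative_eval_zero]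
    push_cast
    ring
  · simp only [leval_apply, h2, h3, h4, cheb_eval_one]
    norm_num
  · simp only [leval_apply, h2, h3, h4, cheb_eval_three]
    ring

/-- For `n ≡ 1 (mod 3)` the conditions at `1` and `3` force `a₃ = 0` and `a₂ = a₀`; the double zero
at `0` then determines `a₁` and `a₀`. -/
lemma hankel_six_ratio_one (m : ℕ) : (hankel (catalanConv 6) (3 * m + 1 + 1) : ℚ) =
    (-(3 / 2 * (m + 2) * (2 * m + 3) / (m + 1))) * hankel (catalanConv 6) (3 * m + 1) := by
  have hm : (m : ℚ) + 1 ≠ 0 := by positivity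
  set a₀ : ℚ := -(3 / 2 * (m + 2) * (2 * m + 3) / (m + 1)) with ha
  apply hankel_six_succ (3 * m + 1) a₀ (2 * a₀ + (m + 2) / (m + 1)) a₀ 0
  have h2 (x) := cheb_eval_rec (3 * m) x
  have h3 (x) := cheb_eval_rec (3 * m + 1) x
  have h4 (x) := cheb_eval_rec (3 * m + 2) x
  have h5 (x) := cheb_eval_rec (3 * m + 3) x
  simp only [add_assoc, Nat.reduceAdd] at *
  rintro ψ (rfl | rfl | rfl | rfl)
  · simp only [leval_apply, cheb_eval_zero, ha]
    push_cast
    field_simp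
    ring
  · simp only [leval_apply, LinearMap.comp_apply, cheb_derivative_eval_zero, ha]
    push_cast
    field_simp
    ring
  · simp only [leval_apply, h2, h3, h4, h5, cheb_eval_one]
    ring
  · simp only [leval_apply, h2, h3, h4, h5, cheb_eval_three]
    ring

/-- For `n ≡ 2 (mod 3)` the conditions at `1` and `3` force `a₁ = 0` and `a₂ = 1`; the double zero
at `0` then determines `a₃` and `a₀`. -/
lemma hankel_six_ratio_two (m : ℕ) : (hankel (catalanConv 6) (3 * m + 2 + 1) : ℚ) =
    (2 * (m + 2) / (3 * (m + 1) * (2 * m + 3))) * hankel (catalanConv 6) (3 * m + 2) := by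
  have hm : (m : ℚ) + 1 ≠ 0 := by positivity
  have hm' : 2 * (m : ℚ) + 3 ≠ 0 := by positivity
  apply hankel_six_succ (3 * m + 2) _ 0 1 (2 + 2 / (3 * (2 * m + 3)))
  have h2 (x) := cheb_eval_rec (3 * m) x
  have h3 (x) := cheb_eval_rec (3 * m + 1) x
  have h4 (x) := cheb_eval_rec (3 * m + 2) x
  have h5 (x) := cheb_eval_rec (3 * m + 3) x
  have h6 (x) := cheb_eval_rec (3 * m + 4) x
  simp only [add_assoc, Nat.reduceAdd] at *
  rintro ψ (rfl | rfl | rfl | rfl)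
  · simp only [leval_apply, cheb_eval_zero]
    push_cast
    field_simp
    ring
  · simp only [leval_apply, LinearMap.comp_apply, cheb_derivative_eval_zero]
    push_cast
    field_simp
    ring
  · simp only [leval_apply, h2, h3, h4, h5, h6, cheb_eval_one]
    ring
  · simp only [leval_apply, h2, h3, h4, h5, h6, cheb_eval_three]
    ring

theorem hankel_catalanConv_six (n : ℕ) :
    (hankel (catalanConv 6) (3 * n) : ℚ) = (-1) ^ n * (n + 1) ^ 2 ∧
    (hankel (catalanConv 6) (3 * n + 1) : ℚ) = (-1) ^ n * (n + 1) ^ 2 ∧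
    (hankel (catalanConv 6) (3 * n + 2) : ℚ) =
      (-1) ^ (n + 1) * (3 / 2 * (n + 2) * (n + 1) * (2 * n + 3)) := by
  have h2 (m : ℕ) (h : (hankel (catalanConv 6) (3 * m) : ℚ) = (-1) ^ m * (m + 1) ^ 2) :
      (hankel (catalanConv 6) (3 * m + 2) : ℚ) =
        (-1) ^ (m + 1) * (3 / 2 * (m + 2) * (m + 1) * (2 * m + 3)) := by
    have hm : (m : ℚ) + 1 ≠ 0 := by positivity
    rw [hankel_six_ratio_one, hankel_six_ratio_zero, h]
    field_simp
    ring
  have h0 : (hankel (catalanConv 6) (3 * n) : ℚ) = (-1) ^ n * (n + 1) ^ 2 := by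
    induction n with
    | zero => simp [hankel]
    | succ m ih =>
      have hm : (m : ℚ) + 1 ≠ 0 := by positivity
      have hm' : 2 * (m : ℚ) + 3 ≠ 0 := by positivity
      rw [show 3 * (m + 1) = 3 * m + 2 + 1 by ring, hankel_six_ratio_two, h2 m ih]
      push_cast
      field_simp
      ring
  exact ⟨h0, by rw [hankel_six_ratio_zero, h0, one_mul], h2 n h0⟩
end

section
/- For every natural number n: H_{9n}(F(x,9)) = 1, H_{9n+1}(F(x,9)) = 1, H_{9n+2}(F(x,9)) = −(27/10)·(3n+2)(18n+1)(n+1)(54n^2+42n+5), H_{9n+3}(F(x,9)) = (9/20)·(n+1)^2 (26244n^4+104976n^3+108459n^2+31266n−1460), H_{9n+4}(F(x,9)) = 729(n+1)^3, H_{9n+5}(F(x,9)) = 0, H_{9n+6}(F(x,9)) = −729(n+1)^3, H_{9n+7}(F(x,9)) = (9/20)·(n+1)^2 (26244n^4+104976n^3+108459n^2−17334n−50060), and H_{9n+8}(F(x,9)) = (27/10)·(18n+35)(3n+4)(n+1)(54n^2+174n+137). -/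
/-!
Why the formulas hold. Substitute `x = z + 2 + 1/z` and let `U_l = z^l + z^(l-2) + ⋯ + z^(-l)`, a monic
polynomial of degree `l` in `x`. Let `L` be the linear functional with `L(x^k) = C_k^{(9)}`. Then
`L(U_l) = binom(7, l)`, so in the basis `(U_l)` the Hankel form has Gram matrix
`L(U_i U_j) = S(|i-j|) - S(i+j+2)`, where `S(m) = ∑_{k ≥ m, k ≡ m mod 2} binom(7, k)` vanishes for
`m > 7` (`gramEntry`). The change of basis is unitriangular, hence `H_n` is the determinant of an
`n × n` truncation of this banded matrix (`hankel_eq_det_gram`).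

Away from its top left corner the matrix is Toeplitz with symbol
`∑ S(|m|) z^m = z^(-7) (1+z)^6 (z^9-1)/(z-1)`. The sequences annihilated by all its rows form a space
of dimension `7`, spanned, in terms of `s = j + 1`, by `(-1)^j s`, `(-1)^j s^3`, `(-1)^j s^5` and the
four odd functions `δ_{s ≡ a} - δ_{s ≡ -a}` of `s mod 9`, `1 ≤ a ≤ 4` (`solBasis`). A block
determinant identity in the spirit of Christoffel's formula (`det_gram_mul`) turns the truncated
determinant into a quotient of two `7 × 7` determinants: with `D(n)` the determinant of the values of
the seven solutions at `n, …, n+6`, one has `(-1)^n H_n D(0) = D(n)`, and `D(0) = -720`.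

Since four of the columns of `D(9n+r)` depend only on `r` and the others are powers of linear
functions of `n`, the nine cases are polynomial identities, obtained by expanding along the four
sparse columns (`solDet_0`, …, `solDet_8`).
-/

/-! ### From the Hankel matrix to a banded Gram matrix -/

/-- `S(m) = ∑_{k ≥ m, k ≡ m mod 2} binom(7, k)`, which is `0` for `m > 7`. -/
def bandS : ℕ → ℤ
  | 0 => 64
  | 1 => 64
  | 2 => 63
  | 3 => 57
  | 4 => 42
  | 5 => 22
  | 6 => 7
  | 7 => 1
  | _ => 0

/-- The Gram matrix entry `L(U_i U_j) = S(|i-j|) - S(i+j+2)`. -/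
def gramEntry (i j : ℕ) : ℤ :=
  bandS ((i : ℤ) - j).natAbs - bandS (i + j + 2)

/-- Multiplication by `x = z + 2 + 1/z` in the basis `(U_l)`, acting on coefficient sequences:
the symmetric tridiagonal operator coming from `x U_l = U_{l+1} + 2 U_l + U_{l-1}`, with `U_{-1} = 0`. -/
def jacobi (f : ℕ → ℤ) : ℕ → ℤ
  | 0 => 2 * f 0 + f 1
  | l + 1 => f l + 2 * f (l + 1) + f (l + 2)

theorem jacobi_zero (f : ℕ → ℤ) : jacobi f 0 = 2 * f 0 + f 1 := rfl

theorem jacobi_succ (f : ℕ → ℤ) (l : ℕ) :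
    jacobi f (l + 1) = f l + 2 * f (l + 1) + f (l + 2) := rfl

/-- `powCoeff k l` is the coefficient of `U_l` in `x^k`. -/
def powCoeff : ℕ → ℕ → ℤ
  | 0 => fun l => if l = 0 then 1 else 0
  | k + 1 => jacobi (powCoeff k)

/-- `gramCoeff j k` is the value `L(x^j U_k)`. -/
def gramCoeff : ℕ → ℕ → ℤ
  | 0 => fun k => gramEntry k 0
  | j + 1 => jacobi (gramCoeff j)

theorem powCoeff_eq_zero : ∀ k l : ℕ, k < l → powCoeff k l = 0
  | 0, l, h => by
    have : l ≠ 0 := by omega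
    simp [powCoeff, this]
  | k + 1, 0, h => by omega
  | k + 1, l + 1, h => by
    simp only [powCoeff, jacobi]
    rw [powCoeff_eq_zero k l (by omega), powCoeff_eq_zero k (l + 1) (by omega),
      powCoeff_eq_zero k (l + 2) (by omega)]
    simp

theorem powCoeff_self : ∀ k : ℕ, powCoeff k k = 1
  | 0 => by simp [powCoeff]
  | k + 1 => by
    simp only [powCoeff, jacobi]
    rw [powCoeff_self k, powCoeff_eq_zero k (k + 1) (by omega),
      powCoeff_eq_zero k (k + 2) (by omega)]
    simp

/-- Summation by parts: on a finite range, the tridiagonal operator is symmetric up to boundary terms. -/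
theorem sum_jacobi_sub (f g : ℕ → ℤ) (N : ℕ) :
    ∑ l ∈ Finset.range (N + 1), g l * jacobi f l - ∑ l ∈ Finset.range (N + 1), jacobi g l * f l =
      f (N + 1) * g N - f N * g (N + 1) := by
  induction N with
  | zero => simp [jacobi]; ring
  | succ N ih =>
    rw [Finset.sum_range_succ, Finset.sum_range_succ _ (N + 1)]
    simp only [jacobi_succ]
    linear_combination ih

theorem sum_mul_jacobi_powCoeff (g : ℕ → ℤ) {k N : ℕ} (h : k + 1 < N) :
    ∑ l ∈ Finset.range N, g l * powCoeff (k + 1) l =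
      ∑ l ∈ Finset.range N, jacobi g l * powCoeff k l := by
  obtain ⟨N, rfl⟩ : ∃ M, N = M + 1 := ⟨N - 1, by omega⟩
  have := sum_jacobi_sub (powCoeff k) g N
  rw [powCoeff_eq_zero k (N + 1) (by omega), powCoeff_eq_zero k N (by omega)] at this
  simp only [powCoeff]
  linear_combination this

theorem gramEntry_comm (i j : ℕ) : gramEntry i j = gramEntry j i := by
  unfold gramEntry
  rw [← Int.natAbs_neg, neg_sub, Nat.add_comm i j]

/-- The Gram matrix commutes with the tridiagonal operator; on the form side this is
`L((x U_l) U_k) = L(U_l (x U_k))`. -/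
theorem jacobi_gramEntry (k l : ℕ) :
    jacobi (gramEntry k) l = jacobi (fun k => gramEntry k l) k := by
  rcases k with _ | k <;> rcases l with _ | l <;> simp only [jacobi, gramEntry]
  · congr 2
  · push_cast
    have e1 : ((0 : ℤ) - l).natAbs = l := by omega
    have e2 : ((0 : ℤ) - (l + 1)).natAbs = l + 1 := by omega
    have e3 : ((0 : ℤ) - (l + 2)).natAbs = l + 2 := by omega
    have e4 : ((1 : ℤ) - (l + 1)).natAbs = l := by omega
    simp only [e1, e2, e3, e4]
    ring_nf
  · push_cast
    have e2 : (((k : ℤ) + 1) - 0).natAbs = k + 1 := by omega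
    have e3 : (((k : ℤ) + 2) - 0).natAbs = k + 2 := by omega
    have e4 : ((k : ℤ) - 0).natAbs = k := by omega
    have e5 : (((k : ℤ) + 1) - 1).natAbs = k := by omega
    simp only [e2, e3, e4, e5]
    ring_nf
  · push_cast
    have e1 : ((k : ℤ) + 1 - l).natAbs = ((k : ℤ) + 2 - (l + 1)).natAbs := by congr 1; ring
    have e2 : ((k : ℤ) + 1 - (l + 2)).natAbs = ((k : ℤ) - (l + 1)).natAbs := by congr 1; ring
    have e5 : (k + 1 + l + 2) = k + (l + 1) + 2 := by omega
    have e6 : (k + 1 + (l + 2) + 2) = k + 2 + (l + 1) + 2 := by omega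
    rw [e1, e2, e5, e6]
    ring

theorem gramCoeff_eq_sum (j : ℕ) : ∀ (k N : ℕ), j < N →
    gramCoeff j k = ∑ l ∈ Finset.range N, gramEntry k l * powCoeff j l := by
  induction j with
  | zero =>
    intro k N h
    rw [Finset.sum_eq_single 0]
    · simp [gramCoeff, powCoeff]
    · intro b _ hb
      simp [powCoeff, hb]
    · intro h0
      simp at h0
      omega
  | succ j ih =>
    intro k N h
    rw [sum_mul_jacobi_powCoeff _ h]
    simp only [gramCoeff]
    rcases k with _ | k
    · simp only [jacobi_zero, ih _ N (show j < N by omega)]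
      rw [Finset.mul_sum, ← Finset.sum_add_distrib]
      refine Finset.sum_congr rfl fun l _ => ?_
      rw [jacobi_gramEntry]
      simp only [jacobi_zero]
      ring
    · simp only [jacobi_succ, ih _ N (show j < N by omega)]
      rw [Finset.mul_sum, ← Finset.sum_add_distrib, ← Finset.sum_add_distrib]
      refine Finset.sum_congr rfl fun l _ => ?_
      rw [jacobi_gramEntry]
      simp only [jacobi_succ]
      ring

/-- Moving the factors `x` one at a time from `x^i` to `x^j` shows that the form
evaluated on `x^i` and `x^j` depends only on `i + j`. -/
theorem sum_gramCoeff_mul (i : ℕ) : ∀ (j N : ℕ), i < N →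
    ∑ k ∈ Finset.range N, gramCoeff j k * powCoeff i k = gramCoeff (i + j) 0 := by
  induction i with
  | zero =>
    intro j N h
    rw [Finset.sum_eq_single 0]
    · simp [powCoeff]
    · intro b _ hb
      simp [powCoeff, hb]
    · intro h0
      simp at h0
      omega
  | succ i ih =>
    intro j N h
    rw [sum_mul_jacobi_powCoeff _ h]
    have := ih (j + 1) N (by omega)
    rw [show i + 1 + j = i + (j + 1) by ring, ← this]
    rfl

/-- Ballot numbers: by the reflection principle, the number of weighted walks killed at `-1`,
with step weights `1, 2, 1`, is a difference of two numbers of free walks, which are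
given by the coefficients of `(z + 2 + 1/z)^k`. -/
theorem powCoeff_eq_choose (k : ℕ) : ∀ l : ℕ,
    powCoeff k l = ((2 * k).choose (k + l) : ℤ) - (2 * k).choose (k + l + 2) := by
  induction k with
  | zero =>
    intro l
    rcases l with _ | l
    · simp [powCoeff]
    · simp [powCoeff]
  | succ k ih =>
    intro l
    rcases l with _ | l
    · simp only [powCoeff, jacobi, ih]
      rw [show 2 * (k + 1) = 2 * k + 1 + 1 by ring, show k + 1 + 0 = k + 1 by ring]
      rcases k with _ | k
      · simp [Nat.choose]
      have hs : (2 * (k + 1)).choose k = (2 * (k + 1)).choose (k + 2) := by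
        rw [← Nat.choose_symm (by omega)]
        congr 1
        omega
      simp only [Nat.choose_succ_succ' (2 * (k + 1) + 1), Nat.choose_succ_succ' (2 * (k + 1)), hs]
      push_cast
      ring_nf
    · simp only [powCoeff, jacobi, ih]
      rw [show 2 * (k + 1) = 2 * k + 1 + 1 by ring, show k + 1 + (l + 1) = k + l + 1 + 1 by ring]
      simp only [Nat.choose_succ_succ' (2 * k + 1), Nat.choose_succ_succ' (2 * k)]
      push_cast
      ring_nf

theorem gramEntry_zero (l : ℕ) : gramEntry 0 l = Nat.choose 7 l := by
  by_cases h : l < 8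
  · interval_cases l <;> decide
  · obtain ⟨m, rfl⟩ : ∃ m, l = m + 8 := ⟨l - 8, by omega⟩
    rw [Nat.choose_eq_zero_of_lt (by omega)]
    have e : ((0 : ℕ) - ((m + 8 : ℕ) : ℤ)).natAbs = m + 8 := by omega
    simp only [gramEntry, e]
    simp [bandS]

/-- The moments `L(x^k)` in closed form, by Vandermonde's convolution of the ballot numbers with
`L(U_l) = binom(7, l)`. -/
theorem gramCoeff_zero_eq (k : ℕ) :
    gramCoeff k 0 = ((2 * k + 7).choose (k + 7) : ℤ) - (2 * k + 7).choose (k + 9) := by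
  have h8 : gramCoeff k 0 = ∑ l ∈ Finset.range 8, gramEntry 0 l * powCoeff k l := by
    rw [gramCoeff_eq_sum k 0 (8 + k) (by omega), Finset.sum_range_add, add_eq_left]
    refine Finset.sum_eq_zero fun x _ => ?_
    rw [gramEntry_zero, Nat.choose_eq_zero_of_lt (by omega)]
    simp
  rw [h8]
  simp only [gramEntry_zero, powCoeff_eq_choose, Finset.sum_range_succ, Finset.sum_range_zero]
  simp only [Nat.choose_succ_succ' (2 * k + 6), Nat.choose_succ_succ' (2 * k + 5),
    Nat.choose_succ_succ' (2 * k + 4), Nat.choose_succ_succ' (2 * k + 3),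
    Nat.choose_succ_succ' (2 * k + 2), Nat.choose_succ_succ' (2 * k + 1),
    Nat.choose_succ_succ' (2 * k)]
  simp [Nat.choose]
  ring

theorem catalanConv_nine (k : ℕ) : catalanConv 9 k = gramCoeff k 0 := by
  unfold catalanConv
  rw [gramCoeff_zero_eq]
  have hk : (2 * (k : ℤ) + (9 : ℕ)) ≠ 0 := by positivity
  refine Int.ediv_eq_of_eq_mul_right hk ?_
  have h1 := Nat.choose_succ_right_eq (2 * k + 7) (k + 7)
  have h2 := Nat.choose_succ_right_eq (2 * k + 7) (k + 8)
  have hs : (2 * k + 9).choose k = (2 * k + 9).choose (k + 9) := by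
    rw [← Nat.choose_symm (by omega)]
    congr 1
    omega
  -- Pascal's rule twice writes everything in terms of three neighbours in row `2 * k + 7`.
  rw [hs]
  simp only [Nat.choose_succ_succ' (2 * k + 8), Nat.choose_succ_succ' (2 * k + 7)]
  rw [show 2 * k + 7 - (k + 7) = k by omega] at h1
  have h2' : ((2 * k + 7).choose (k + 9) : ℤ) * (k + 9) =
      ((2 * k + 7).choose (k + 8) : ℤ) * (k - 1) := by
    rcases k with _ | k
    · simp [Nat.choose]
    · rw [show 2 * (k + 1) + 7 - (k + 1 + 8) = k by omega] at h2
      push_cast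
      have := congrArg (Nat.cast : ℕ → ℤ) h2
      push_cast at this
      linear_combination this
  have h1' := congrArg (Nat.cast : ℕ → ℤ) h1
  push_cast at h1' ⊢
  linear_combination 2 * h1' + (2 : ℤ) * h2'

theorem hankel_eq_det_gram (n : ℕ) :
    hankel (catalanConv 9) n = (Matrix.of fun i j : Fin n => gramEntry i j).det := by
  set P : Matrix (Fin n) (Fin n) ℤ := Matrix.of fun i k => powCoeff i k with hP
  have hdet : P.det = 1 := by
    rw [Matrix.det_of_isLowerTriangular P]
    · simp [hP, powCoeff_self]
    · intro i j hij
      exact powCoeff_eq_zero _ _ hij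
  have key : (Matrix.of fun i j : Fin n => catalanConv 9 (i.val + j.val)) =
      P * (Matrix.of fun i j : Fin n => gramEntry i j) * P.transpose := by
    ext i j
    rw [Matrix.mul_assoc, Matrix.mul_apply]
    simp only [Matrix.mul_apply, Matrix.of_apply, Matrix.transpose_apply, hP]
    rw [catalanConv_nine, ← sum_gramCoeff_mul i j n i.isLt, Finset.sum_range]
    refine Finset.sum_congr rfl fun k _ => ?_
    rw [gramCoeff_eq_sum j k n j.isLt, Finset.sum_range, mul_comm]
  rw [hankel, key, Matrix.det_mul, Matrix.det_mul, Matrix.det_transpose, hdet]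
  ring

/-! ### Kernel sequences of the Gram matrix -/

theorem gramEntry_add_seven (i : ℕ) : gramEntry i (i + 7) = 1 := by
  have e : ((i : ℤ) - ((i + 7 : ℕ) : ℤ)).natAbs = 7 := by omega
  simp only [gramEntry, e, show i + (i + 7) + 2 = 2 * i + 1 + 8 by ring]
  simp [bandS]

theorem gramEntry_eq_zero {i j : ℕ} (h : i + 7 < j) : gramEntry i j = 0 := by
  obtain ⟨m, rfl⟩ : ∃ m, j = i + m + 8 := ⟨j - i - 8, by omega⟩
  have e : ((i : ℤ) - ((i + m + 8 : ℕ) : ℤ)).natAbs = m + 8 := by omega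
  simp only [gramEntry, e, show i + (i + m + 8) + 2 = 2 * i + m + 2 + 8 by ring]
  simp [bandS]

/-- From row `7` on, the Gram matrix is Toeplitz: the Hankel part vanishes on the band. -/
theorem gramEntry_interior (m t : ℕ) :
    gramEntry (m + 7) (m + t) = bandS ((7 : ℤ) - t).natAbs := by
  have e : (((m + 7 : ℕ) : ℤ) - ((m + t : ℕ) : ℤ)).natAbs = ((7 : ℤ) - t).natAbs := by
    congr 1
    push_cast
    ring
  simp only [gramEntry, e, show m + 7 + (m + t) + 2 = 2 * m + t + 1 + 8 by ring]
  simp [bandS]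

theorem gramEntry_low (m t : ℕ) (h : t < m) : gramEntry (m + 7) t = 0 := by
  rw [gramEntry_comm]
  exact gramEntry_eq_zero (by omega)

/-- The sequence `u` is annihilated by every row of the infinite Gram matrix. Row `i` is supported on
`j ≤ i + 7`, so the sum over `j < i + 8` is the full row sum. -/
def InKernel (u : ℕ → ℤ) : Prop :=
  ∀ i : ℕ, ∑ j ∈ Finset.range (i + 8), gramEntry i j * u j = 0

/-- Only the first seven rows are not instances of the Toeplitz recurrence, whose characteristic
polynomial is `(1+z)^6 (z^9-1)/(z-1)`. -/
theorem inKernel_of_recurrence (u : ℕ → ℤ)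
    (h0 : ∀ i < 7, ∑ j ∈ Finset.range (i + 8), gramEntry i j * u j = 0)
    (h : ∀ m : ℕ, u m + 7 * u (m + 1) + 22 * u (m + 2) + 42 * u (m + 3) + 57 * u (m + 4)
      + 63 * u (m + 5) + 64 * u (m + 6) + 64 * u (m + 7) + 64 * u (m + 8) + 63 * u (m + 9)
      + 57 * u (m + 10) + 42 * u (m + 11) + 22 * u (m + 12) + 7 * u (m + 13)
      + u (m + 14) = 0) : InKernel u := by
  intro i
  by_cases hi : i < 7
  · exact h0 i hi
  · obtain ⟨m, rfl⟩ : ∃ m, i = m + 7 := ⟨i - 7, by omega⟩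
    rw [show m + 7 + 8 = m + 15 by ring, Finset.sum_range_add]
    rw [Finset.sum_eq_zero (fun x hx => by
      rw [gramEntry_low m x (Finset.mem_range.mp hx), zero_mul])]
    simp only [gramEntry_interior, Finset.sum_range_succ, Finset.sum_range_zero]
    norm_num [bandS]
    linear_combination h m

theorem inKernel_pow (p : ℕ) (hp : p = 1 ∨ p = 3 ∨ p = 5) :
    InKernel (fun j => (-1) ^ j * ((j : ℤ) + 1) ^ p) := by
  apply inKernel_of_recurrence
  · rcases hp with rfl | rfl | rfl <;> decide
  · intro m
    push_cast
    rcases hp with rfl | rfl | rfl <;> ring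

/-- The odd function `δ_{s ≡ a} - δ_{s ≡ -a}` of `s = j + 1` modulo `9`, for `1 ≤ a ≤ 4`. -/
def oddPeriodic (a j : ℕ) : ℤ :=
  if (j + 1) % 9 = a then 1 else if (j + 1) % 9 = 9 - a then -1 else 0

theorem oddPeriodic_mod (a m t : ℕ) : oddPeriodic a (m + t) = oddPeriodic a (m % 9 + t) := by
  have : (m + t + 1) % 9 = (m % 9 + t + 1) % 9 := by omega
  simp only [oddPeriodic, this]

theorem inKernel_oddPeriodic (a : ℕ) (h1 : 1 ≤ a) (h4 : a ≤ 4) : InKernel (oddPeriodic a) := by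
  apply inKernel_of_recurrence
  · interval_cases a <;> decide
  · intro m
    have hm : m % 9 < 9 := Nat.mod_lt _ (by norm_num)
    have h0 := oddPeriodic_mod a m 0
    rw [add_zero, add_zero] at h0
    simp only [h0, oddPeriodic_mod a m]
    generalize m % 9 = r at hm
    clear h0
    interval_cases a <;> interval_cases r <;> decide

/-! ### Reduction to determinants of order seven -/

theorem coe_finRotate_pow (n k : ℕ) (i : Fin (n + 1)) :
    (((finRotate (n + 1)) ^ k) i : ℕ) = (i + k) % (n + 1) := by
  induction k with
  | zero => simp [Nat.mod_eq_of_lt i.isLt]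
  | succ k ih =>
    rw [pow_succ', Equiv.Perm.mul_apply, finRotate_apply, Fin.val_add, ih, Fin.val_one',
      ← Nat.add_mod]
    congr 1

/-- If the seven columns of `Φ` are kernel sequences, the `n`-th truncated Gram determinant is, up to
sign, the quotient of the `7 × 7` determinants of `Φ` on the windows `n, …, n+6` and `0, …, 6`.

Let `(M | M')` be the first `n` rows of the Gram matrix, restricted to the columns `j < n + 7` that
support them. Multiplying `((M, M'), (0, 1))` by the square matrix `W` whose first `n` columns are the
unit vectors at `7, …, n+6` and whose last `7` columns are those of `Φ` gives a block triangular
matrix with diagonal blocks `B` (unitriangular) and the window of `Φ` at `n`. -/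
theorem det_gram_mul (Φ : ℕ → Fin 7 → ℤ) (hΦ : ∀ c, InKernel (fun j => Φ j c)) (n : ℕ) :
    (-1) ^ n * (Matrix.of fun i j : Fin n => gramEntry i j).det *
      (Matrix.of fun i j : Fin 7 => Φ i j).det = (Matrix.of fun i j : Fin 7 => Φ (n + i) j).det := by
  let M : Matrix (Fin n) (Fin n) ℤ := Matrix.of fun i j => gramEntry i j
  let M' : Matrix (Fin n) (Fin 7) ℤ := Matrix.of fun i j => gramEntry i (n + j)
  let B : Matrix (Fin n) (Fin n) ℤ := Matrix.of fun i j => gramEntry i (j + 7)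
  let e : Fin n ⊕ Fin 7 ≃ Fin (n + 7) := finSumFinEquiv
  let e' : Fin 7 ⊕ Fin n ≃ Fin (n + 7) := finSumFinEquiv.trans (finCongr (Nat.add_comm 7 n))
  -- `V` is `W` with its last seven columns moved to the front, which makes it block triangular.
  let V : Matrix (Fin (n + 7)) (Fin (n + 7)) ℤ := Matrix.of fun r c =>
    if h : (c : ℕ) < 7 then Φ r ⟨c, h⟩ else if r = c then 1 else 0
  let σ : Equiv.Perm (Fin (n + 7)) := finRotate (n + 6 + 1) ^ 7
  let W : Matrix (Fin (n + 7)) (Fin (n + 7)) ℤ := V.submatrix id σ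
  let X : Matrix (Fin n ⊕ Fin 7) (Fin n ⊕ Fin 7) ℤ := Matrix.fromBlocks M M' 0 1
  have hW : W.det = (-1) ^ n * V.det := by
    simp only [W, σ]
    rw [Matrix.det_permute', map_pow, sign_finRotate]
    congr 1
    push_cast
    -- seven cyclic shifts of `n + 7` columns have sign `(-1) ^ (7 * (n + 6)) = (-1) ^ n`
    rw [← pow_mul, show (n + 6) * 7 = n + 2 * (3 * n + 21) by ring,
      pow_add, pow_mul (-1 : ℤ) 2]
    simp
  have hV : V.det = (Matrix.of fun i j : Fin 7 => Φ i j).det := by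
    have : V.submatrix e' e' = Matrix.fromBlocks (Matrix.of fun i j : Fin 7 => Φ i j) 0
        (Matrix.of fun (i : Fin n) (j : Fin 7) => Φ (7 + i) j) 1 := by
      ext (i | i) (j | j)
      · simp [V, e']
      · have := i.isLt
        simp [V, e', Fin.ext_iff]
        omega
      · simp [V, e', Nat.add_comm]
      · simp [V, e', Fin.ext_iff, Matrix.one_apply]
    rw [← Matrix.det_submatrix_equiv_self e', this, Matrix.det_fromBlocks_zero₁₂, Matrix.det_one,
      mul_one]
  have hB : B.det = 1 := by
    rw [Matrix.det_of_isLowerTriangular B]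
    · simp [B, gramEntry_add_seven]
    · intro i j hij
      have : (i : ℕ) < j := hij
      exact gramEntry_eq_zero (by omega)
  have hWl : ∀ (r : Fin (n + 7)) (c : Fin n), W r (e (Sum.inl c)) = if (r : ℕ) = c + 7 then 1 else 0 := by
    intro r c
    have h1 : (σ (e (Sum.inl c)) : ℕ) = c + 7 := by
      refine (coe_finRotate_pow _ _ _).trans ?_
      simp only [e, finSumFinEquiv_apply_left, Fin.val_castAdd]
      exact Nat.mod_eq_of_lt (by omega)
    simp only [W, V, Matrix.submatrix_apply, Matrix.of_apply, h1, id, Fin.ext_iff]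
    rw [dif_neg (by omega)]
  have hWr : ∀ (r : Fin (n + 7)) (c : Fin 7), W r (e (Sum.inr c)) = Φ r c := by
    intro r c
    have h1 : (σ (e (Sum.inr c)) : ℕ) = c := by
      refine (coe_finRotate_pow _ _ _).trans ?_
      simp only [e, finSumFinEquiv_apply_right, Fin.val_natAdd]
      rw [show n + (c : ℕ) + 7 = c + (n + 6 + 1) by ring, Nat.add_mod_right]
      exact Nat.mod_eq_of_lt (by omega)
    simp only [W, V, Matrix.submatrix_apply, Matrix.of_apply, h1, id]
    rw [dif_pos c.isLt]
  have hsum : ∀ (i : Fin n) (f : ℕ → ℤ),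
      ∑ x : Fin n ⊕ Fin 7, X (Sum.inl i) x * f (e x) =
        ∑ j ∈ Finset.range (n + 7), gramEntry i j * f j := by
    intro i f
    rw [Finset.sum_range, ← Equiv.sum_comp e, Fintype.sum_sum_type, Fintype.sum_sum_type]
    simp [X, M, M', e]
  have hXW : X * W.submatrix e e = Matrix.fromBlocks B 0
      (Matrix.of fun (t : Fin 7) (c : Fin n) => if n + (t : ℕ) = c + 7 then 1 else 0)
      (Matrix.of fun i j : Fin 7 => Φ (n + i) j) := by
    ext (i | i) (j | j)
    · have := hsum i (fun r => if r = (j : ℕ) + 7 then 1 else 0)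
      simp only [Matrix.mul_apply, Matrix.submatrix_apply, hWl]
      rw [this]
      simp only [mul_ite, mul_one, mul_zero]
      rw [Finset.sum_ite_eq']
      simp [B]
    · have := hsum i (fun r => Φ r j)
      simp only [Matrix.mul_apply, Matrix.submatrix_apply, hWr]
      rw [this]
      have hi := i.isLt
      rw [show n + 7 = i + 8 + (n - i - 1) by omega, Finset.sum_range_add, hΦ j i, zero_add]
      refine Finset.sum_eq_zero fun x _ => ?_
      rw [gramEntry_eq_zero (by omega), zero_mul]
    · simp only [Matrix.mul_apply, X, Fintype.sum_sum_type, Matrix.submatrix_apply, hWl]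
      by_cases h : n + (i : ℕ) = j + 7 <;> simp [Matrix.one_apply, e, h]
    · simp only [Matrix.mul_apply, X, Fintype.sum_sum_type, Matrix.submatrix_apply, hWr]
      simp [Matrix.one_apply, e]
  have hd := congrArg Matrix.det hXW
  rw [Matrix.det_mul, Matrix.det_fromBlocks_zero₁₂, Matrix.det_fromBlocks_zero₂₁,
    Matrix.det_submatrix_equiv_self, hW, hV, hB, Matrix.det_one] at hd
  rw [← one_mul (Matrix.det (Matrix.of fun i j : Fin 7 => Φ (n + i) j)), ← hd]
  ring

/-! ### Evaluation of the determinants of order seven -/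

/-- The values at `j` of a basis of the kernel of the Gram matrix: four odd `9`-periodic functions and
three alternating odd powers of `j + 1`. -/
def solBasis (j : ℕ) : Fin 7 → ℤ :=
  ![oddPeriodic 1 j, oddPeriodic 2 j, oddPeriodic 3 j, oddPeriodic 4 j,
    (-1) ^ j * ((j : ℤ) + 1) ^ 1, (-1) ^ j * ((j : ℤ) + 1) ^ 3, (-1) ^ j * ((j : ℤ) + 1) ^ 5]

theorem inKernel_solBasis (c : Fin 7) : InKernel (fun j => solBasis j c) := by
  fin_cases c
  · exact inKernel_oddPeriodic 1 (by norm_num) (by norm_num)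
  · exact inKernel_oddPeriodic 2 (by norm_num) (by norm_num)
  · exact inKernel_oddPeriodic 3 (by norm_num) (by norm_num)
  · exact inKernel_oddPeriodic 4 (by norm_num) (by norm_num)
  · exact inKernel_pow 1 (by norm_num)
  · exact inKernel_pow 3 (by norm_num)
  · exact inKernel_pow 5 (by norm_num)

/-- The determinant of the seven kernel sequences on the window `N, …, N+6`. -/
def solDet (N : ℕ) : ℤ := (Matrix.of fun i j : Fin 7 => solBasis (N + i) j).det

/-- The sign `(-1)^(9n) = (-1)^n` is pulled out of each of the last three columns, which leaves
a matrix whose first four columns depend only on `r`. -/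
theorem solDet_nine_mul_add (n r : ℕ) : solDet (9 * n + r) = (-1) ^ n *
    (Matrix.of fun i : Fin 7 => ![oddPeriodic 1 (r + i), oddPeriodic 2 (r + i),
      oddPeriodic 3 (r + i), oddPeriodic 4 (r + i),
      (-1) ^ (r + i.val) * (9 * (n : ℤ) + r + i + 1),
      (-1) ^ (r + i.val) * (9 * (n : ℤ) + r + i + 1) ^ 3,
      (-1) ^ (r + i.val) * (9 * (n : ℤ) + r + i + 1) ^ 5]).det := by
  have he : (-1 : ℤ) ^ n =
      ∏ j : Fin 7, (![1, 1, 1, 1, (-1) ^ n, (-1) ^ n, (-1) ^ n] : Fin 7 → ℤ) j := by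
    simp [Fin.prod_univ_succ]
    rw [← pow_add, ← two_mul, pow_mul]
    simp
  have hp : ∀ a i, oddPeriodic a (9 * n + r + i) = oddPeriodic a (r + i) := fun a i => by
    simp only [oddPeriodic, show (9 * n + r + i + 1) % 9 = (r + i + 1) % 9 by omega]
  have hs : ∀ i, (-1 : ℤ) ^ (9 * n + r + i) = (-1) ^ n * (-1) ^ (r + i) := fun i => by
    rw [add_assoc, pow_add, pow_mul]
    norm_num
  rw [solDet, he, ← Matrix.det_mul_row]
  congr 1
  ext i j
  fin_cases j <;> simp [solBasis, hp, hs] <;> ring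

/-- Here and in the next eight lemmas, the determinant is expanded along its first four columns one at
a time, and the zero entries are discarded at each stage, so that few `3 × 3` minors remain. -/
theorem solDet_0 (n : ℕ) : solDet (9 * n + 0) = (-1) ^ n * (-720) := by
  rw [solDet_nine_mul_add]
  congr 1
  rw [Matrix.det_succ_column_zero, Fin.sum_univ_seven]
  simp [oddPeriodic]
  simp only [Matrix.det_succ_column_zero (n := 5), Fin.sum_univ_six]
  simp
  simp only [Matrix.det_succ_column_zero (n := 4), Fin.sum_univ_five]
  simp [Fin.succAbove]
  simp only [Matrix.det_succ_column_zero (n := 3), Fin.sum_univ_four]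
  simp [Fin.succAbove]
  simp only [Matrix.det_fin_three]
  simp [Fin.succAbove]
  ring

theorem solDet_1 (n : ℕ) : solDet (9 * n + 1) = (-1) ^ n * 720 := by
  rw [solDet_nine_mul_add]
  congr 1
  rw [Matrix.det_succ_column_zero, Fin.sum_univ_seven]
  simp [oddPeriodic]
  simp only [Matrix.det_succ_column_zero (n := 5), Fin.sum_univ_six]
  simp [Fin.succAbove]
  simp only [Matrix.det_succ_column_zero (n := 4), Fin.sum_univ_five]
  simp [Fin.succAbove]
  simp only [Matrix.det_succ_column_zero (n := 3), Fin.sum_univ_four]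
  simp [Fin.succAbove]
  simp only [Matrix.det_fin_three]
  simp [Fin.succAbove]
  ring

theorem solDet_2 (n : ℕ) : solDet (9 * n + 2) = (-1) ^ n *
    (1944 * (3 * (n : ℤ) + 2) * (18 * (n : ℤ) + 1) * ((n : ℤ) + 1)
      * (54 * (n : ℤ) ^ 2 + 42 * (n : ℤ) + 5)) := by
  rw [solDet_nine_mul_add]
  congr 1
  rw [Matrix.det_succ_column_zero, Fin.sum_univ_seven]
  simp [oddPeriodic]
  simp only [Matrix.det_succ_column_zero (n := 5), Fin.sum_univ_six]
  simp [Fin.succAbove]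
  simp only [Matrix.det_succ_column_zero (n := 4), Fin.sum_univ_five]
  simp [Fin.succAbove]
  simp only [Matrix.det_succ_column_zero (n := 3), Fin.sum_univ_four]
  simp [Fin.succAbove]
  simp only [Matrix.det_fin_three]
  simp [Fin.succAbove]
  ring

theorem solDet_3 (n : ℕ) : solDet (9 * n + 3) = (-1) ^ n *
    (324 * ((n : ℤ) + 1) ^ 2 * (26244 * (n : ℤ) ^ 4 + 104976 * (n : ℤ) ^ 3 + 108459 * (n : ℤ) ^ 2
      + 31266 * (n : ℤ) - 1460)) := by
  rw [solDet_nine_mul_add]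
  congr 1
  rw [Matrix.det_succ_column_zero, Fin.sum_univ_seven]
  simp [oddPeriodic]
  simp only [Matrix.det_succ_column_zero (n := 5), Fin.sum_univ_six]
  simp [Fin.succAbove]
  simp only [Matrix.det_succ_column_zero (n := 4), Fin.sum_univ_five]
  simp [Fin.succAbove]
  simp only [Matrix.det_succ_column_zero (n := 3), Fin.sum_univ_four]
  simp [Fin.succAbove]
  simp only [Matrix.det_fin_three]
  simp [Fin.succAbove]
  ring

theorem solDet_4 (n : ℕ) : solDet (9 * n + 4) = (-1) ^ n * (-524880 * ((n : ℤ) + 1) ^ 3) := by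
  rw [solDet_nine_mul_add]
  congr 1
  rw [Matrix.det_succ_column_zero, Fin.sum_univ_seven]
  simp [oddPeriodic]
  simp only [Matrix.det_succ_column_zero (n := 5), Fin.sum_univ_six]
  simp [Fin.succAbove]
  simp only [Matrix.det_succ_column_zero (n := 4), Fin.sum_univ_five]
  simp [Fin.succAbove]
  simp only [Matrix.det_succ_column_zero (n := 3), Fin.sum_univ_four]
  simp [Fin.succAbove]
  simp only [Matrix.det_fin_three]
  simp [Fin.succAbove]
  ring

theorem solDet_5 (n : ℕ) : solDet (9 * n + 5) = (-1) ^ n * 0 := by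
  rw [solDet_nine_mul_add]
  congr 1
  rw [Matrix.det_succ_column_zero, Fin.sum_univ_seven]
  simp [oddPeriodic]
  simp only [Matrix.det_succ_column_zero (n := 5), Fin.sum_univ_six]
  simp [Fin.succAbove]
  simp only [Matrix.det_succ_column_zero (n := 4), Fin.sum_univ_five]
  simp [Fin.succAbove]
  simp only [Matrix.det_succ_column_zero (n := 3), Fin.sum_univ_four]
  simp [Fin.succAbove]

theorem solDet_6 (n : ℕ) : solDet (9 * n + 6) = (-1) ^ n * (524880 * ((n : ℤ) + 1) ^ 3) := by
  rw [solDet_nine_mul_add]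
  congr 1
  rw [Matrix.det_succ_column_zero, Fin.sum_univ_seven]
  simp [oddPeriodic]
  simp only [Matrix.det_succ_column_zero (n := 5), Fin.sum_univ_six]
  simp [Fin.succAbove]
  simp only [Matrix.det_succ_column_zero (n := 4), Fin.sum_univ_five]
  simp [Fin.succAbove]
  simp only [Matrix.det_succ_column_zero (n := 3), Fin.sum_univ_four]
  simp [Fin.succAbove]
  simp only [Matrix.det_fin_three]
  simp [Fin.succAbove]
  ring

theorem solDet_7 (n : ℕ) : solDet (9 * n + 7) = (-1) ^ n *
    (324 * ((n : ℤ) + 1) ^ 2 * (26244 * (n : ℤ) ^ 4 + 104976 * (n : ℤ) ^ 3 + 108459 * (n : ℤ) ^ 2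
      - 17334 * (n : ℤ) - 50060)) := by
  rw [solDet_nine_mul_add]
  congr 1
  rw [Matrix.det_succ_column_zero, Fin.sum_univ_seven]
  simp [oddPeriodic]
  simp only [Matrix.det_succ_column_zero (n := 5), Fin.sum_univ_six]
  simp [Fin.succAbove]
  simp only [Matrix.det_succ_column_zero (n := 4), Fin.sum_univ_five]
  simp [Fin.succAbove]
  simp only [Matrix.det_succ_column_zero (n := 3), Fin.sum_univ_four]
  simp [Fin.succAbove]
  simp only [Matrix.det_fin_three]
  simp [Fin.succAbove]
  ring

theorem solDet_8 (n : ℕ) : solDet (9 * n + 8) = (-1) ^ n *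
    (-1944 * (18 * (n : ℤ) + 35) * (3 * (n : ℤ) + 4) * ((n : ℤ) + 1)
      * (54 * (n : ℤ) ^ 2 + 174 * (n : ℤ) + 137)) := by
  rw [solDet_nine_mul_add]
  congr 1
  rw [Matrix.det_succ_column_zero, Fin.sum_univ_seven]
  simp [oddPeriodic]
  simp only [Matrix.det_succ_column_zero (n := 5), Fin.sum_univ_six]
  simp [Fin.succAbove]
  simp only [Matrix.det_succ_column_zero (n := 4), Fin.sum_univ_five]
  simp [Fin.succAbove]
  simp only [Matrix.det_succ_column_zero (n := 3), Fin.sum_univ_four]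
  simp [Fin.succAbove]
  simp only [Matrix.det_fin_three]
  simp [Fin.succAbove]
  ring

/-- `(-1)^N H_N D(0) = D(N)`, with `D(0) = -720`. -/
theorem hankel_mul_solDet (N : ℕ) :
    (-1) ^ N * hankel (catalanConv 9) N * (-720) = solDet N := by
  have h0 : (Matrix.of fun i j : Fin 7 => solBasis i j).det = -720 := by
    simpa [solDet] using solDet_0 0
  rw [hankel_eq_det_gram, ← h0]
  exact det_gram_mul solBasis inKernel_solBasis N

theorem hankel_of_solDet {n r : ℕ} {P : ℤ} (h : solDet (9 * n + r) = (-1) ^ n * P) :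
    (hankel (catalanConv 9) (9 * n + r) : ℚ) = -((-1) ^ r * P) / 720 := by
  have h1 := hankel_mul_solDet (9 * n + r)
  have e : (-1 : ℤ) ^ (9 * n + r) = (-1) ^ n * (-1) ^ r := by
    rw [pow_add, pow_mul]
    norm_num
  have hn : (-1 : ℤ) ^ n * (-1) ^ n = 1 := by rw [← mul_pow]; norm_num
  have hr : (-1 : ℤ) ^ r * (-1) ^ r = 1 := by rw [← mul_pow]; norm_num
  rw [h, e] at h1
  have h2 : hankel (catalanConv 9) (9 * n + r) * 720 = -((-1) ^ r * P) := by
    linear_combination (-(-1) ^ n * (-1) ^ r) * h1 - ((-1) ^ r * P) * hn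
      - 720 * hankel (catalanConv 9) (9 * n + r) * ((-1) ^ n * (-1) ^ n) * hr
      - 720 * hankel (catalanConv 9) (9 * n + r) * hn
  have h3 := congrArg (Int.cast : ℤ → ℚ) h2
  push_cast at h3
  rw [eq_div_iff (by norm_num)]
  exact h3

theorem hankel_catalanConv_nine (n : ℕ) :
    (hankel (catalanConv 9) (9 * n) : ℚ) = 1 ∧
    (hankel (catalanConv 9) (9 * n + 1) : ℚ) = 1 ∧
    (hankel (catalanConv 9) (9 * n + 2) : ℚ) =
      -(27 / 10) * (3 * n + 2) * (18 * n + 1) * (n + 1) * (54 * (n : ℚ) ^ 2 + 42 * n + 5) ∧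
    (hankel (catalanConv 9) (9 * n + 3) : ℚ) =
      9 / 20 * (n + 1) ^ 2 *
        (26244 * (n : ℚ) ^ 4 + 104976 * (n : ℚ) ^ 3 + 108459 * (n : ℚ) ^ 2 + 31266 * n - 1460) ∧
    (hankel (catalanConv 9) (9 * n + 4) : ℚ) = 729 * (n + 1) ^ 3 ∧
    (hankel (catalanConv 9) (9 * n + 5) : ℚ) = 0 ∧
    (hankel (catalanConv 9) (9 * n + 6) : ℚ) = -729 * (n + 1) ^ 3 ∧
    (hankel (catalanConv 9) (9 * n + 7) : ℚ) =
      9 / 20 * (n + 1) ^ 2 *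
        (26244 * (n : ℚ) ^ 4 + 104976 * (n : ℚ) ^ 3 + 108459 * (n : ℚ) ^ 2 - 17334 * n - 50060) ∧
    (hankel (catalanConv 9) (9 * n + 8) : ℚ) =
      27 / 10 * (18 * n + 35) * (3 * n + 4) * (n + 1) * (54 * (n : ℚ) ^ 2 + 174 * n + 137) := by
  refine ⟨?_, ?_, ?_, ?_, ?_, ?_, ?_, ?_, ?_⟩
  · refine (hankel_of_solDet (r := 0) (solDet_0 n)).trans ?_
    push_cast
    ring
  · refine (hankel_of_solDet (r := 1) (solDet_1 n)).trans ?_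
    push_cast
    ring
  · refine (hankel_of_solDet (r := 2) (solDet_2 n)).trans ?_
    push_cast
    ring
  · refine (hankel_of_solDet (r := 3) (solDet_3 n)).trans ?_
    push_cast
    ring
  · refine (hankel_of_solDet (r := 4) (solDet_4 n)).trans ?_
    push_cast
    ring
  · refine (hankel_of_solDet (r := 5) (solDet_5 n)).trans ?_
    push_cast
    ring
  · refine (hankel_of_solDet (r := 6) (solDet_6 n)).trans ?_
    push_cast
    ring
  · refine (hankel_of_solDet (r := 7) (solDet_7 n)).trans ?_
    push_cast
    ring
  · refine (hankel_of_solDet (r := 8) (solDet_8 n)).trans ?_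
    push_cast
    ring
end
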